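/- Let Kₙ be the complete graph of order n ≥ 3 and let f : V(G₁) → V(G₂) be a function between two disjoint copies G₁, G₂ of Kₙ whose image has size s = |f(V(G₁))| with 1 < s < n. Then dim(C(Kₙ, f)) = 2n − 2 − s. -/

import Mathlib

/-- The functigraph `C(G, f)`: two disjoint copies of `G` (as `Sum.inl`/`Sum.inr`),
with an edge from each `Sum.inl u` to `Sum.inr (f u)`. -/
def functigraph {V : Type*} (G : SimpleGraph V) (f : V → V) : SimpleGraph (V ⊕ V) :=
  SimpleGraph.fromRel (fun x y =>
    match x, y with
    | Sum.inl a, Sum.inl b => G.Adj a b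
    | Sum.inr a, Sum.inr b => G.Adj a b
    | Sum.inl a, Sum.inr b => f a = b
    | Sum.inr _, Sum.inl _ => False)

/-- `S` is a resolving set of `H`: every pair of distinct vertices is resolved by some `w ∈ S`. -/
def IsResolving {V : Type*} (H : SimpleGraph V) (S : Set V) : Prop :=
  ∀ x y : V, x ≠ y → ∃ w ∈ S, H.dist x w ≠ H.dist y w

/-- The metric dimension of `H`: minimum cardinality of a (finite) resolving set. -/
noncomputable def metricDim {V : Type*} (H : SimpleGraph V) : ℕ :=
  sInf {k | ∃ S : Set V, IsResolving H S ∧ S.Finite ∧ S.ncard = k}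

/-- The cycle graph on `ZMod n` (for `n ≥ 3`): `i` is adjacent to `i ± 1`. -/
def cycGraph (n : ℕ) : SimpleGraph (ZMod n) :=
  SimpleGraph.fromRel (fun i j => j = i + 1)

/-- The closed neighborhood `N[S]` of a set `S` in `H`. -/
def closedNbhd {V : Type*} (H : SimpleGraph V) (S : Set V) : Set V :=
  S ∪ {x | ∃ s ∈ S, H.Adj x s}

/-! Write `A` and `B` for the vertices of the two copies of the complete graph that a resolving set
`S` misses. All vertices of the first copy are at distance `1` from each other, so two vertices of
`A` can only be resolved by a vertex of the second copy that is a value of `f` at exactly one of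
them: `f` is injective on `A`, and `|f(A) ∩ B| ≤ 1`. Two vertices of the second copy outside the
range of `f` are resolved only by themselves, so `|B \ range f| ≤ 1`. Inclusion–exclusion inside
`range f` gives `|A| + |B| ≤ s + 2`.

Conversely, if `f` identifies `a` with some other vertex and `b` is not a value of `f`, then `S` may
omit `a`, `b` and all of `range f`: each value of `f` is still attained at some `y ≠ a`, and such a
`y` is at distance `1` from that value but `2` from the rest of the second copy. A value other than
`c` moreover yields a `y` at distance `1` from `a` and `2` from the vertex `c` of the second copy.
-/

section SetLemmas

variable {α β : Type*}

theorem ncard_preimage_inl_add_ncard_preimage_inr {s : Set (α ⊕ β)} (hs : s.Finite) :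
    (Sum.inl ⁻¹' s).ncard + (Sum.inr ⁻¹' s).ncard = s.ncard := by
  rw [← Set.ncard_image_of_injective (Sum.inl ⁻¹' s) Sum.inl_injective,
    ← Set.ncard_image_of_injective (Sum.inr ⁻¹' s) Sum.inr_injective,
    ← Set.ncard_union_eq Set.disjoint_image_inl_image_inr
      (hs.subset (Set.image_preimage_subset _ _)) (hs.subset (Set.image_preimage_subset _ _)),
    Set.image_preimage_inl_union_image_preimage_inr]

theorem exists_image_compl_singleton_eq_range {f : α → β} (hf : ¬Function.Injective f) :
    ∃ a, f '' {a}ᶜ = Set.range f := by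
  obtain ⟨a, a', hfa, hne⟩ := Function.not_injective_iff.1 hf
  refine ⟨a, (Set.image_subset_range f _).antisymm ?_⟩
  rintro _ ⟨x, rfl⟩
  obtain rfl | hx := eq_or_ne x a
  · exact ⟨a', hne.symm, hfa.symm⟩
  · exact ⟨x, hx, rfl⟩

end SetLemmas

section MetricDimension

variable {V : Type*} {H : SimpleGraph V} {S : Set V}

theorem IsResolving.of_pairwise_compl (hH : H.Preconnected)
    (hS : Sᶜ.Pairwise fun x y => ∃ w ∈ S, H.dist x w ≠ H.dist y w) : IsResolving H S := by
  intro x y hxy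
  by_cases hx : x ∈ S
  · exact ⟨x, hx, by simpa using ((hH y x).pos_dist_of_ne hxy.symm).ne⟩
  by_cases hy : y ∈ S
  · exact ⟨y, hy, by simpa using ((hH x y).pos_dist_of_ne hxy).ne'⟩
  exact hS hx hy hxy

theorem IsResolving.metricDim_eq (hS : IsResolving H S) (hfin : S.Finite)
    (hmin : ∀ T, IsResolving H T → T.Finite → S.ncard ≤ T.ncard) : metricDim H = S.ncard := by
  refine IsLeast.csInf_eq ⟨⟨S, hS, hfin, rfl⟩, ?_⟩
  rintro _ ⟨T, hT, hTfin, rfl⟩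
  exact hmin T hT hTfin

theorem IsResolving.metricDim_eq_card_sub [Finite V] (hS : IsResolving H S)
    (hmax : ∀ T, IsResolving H T → Tᶜ.ncard ≤ Sᶜ.ncard) :
    metricDim H = Nat.card V - Sᶜ.ncard := by
  have hcard := Set.ncard_add_ncard_compl S
  rw [hS.metricDim_eq S.toFinite fun T hT _ => ?_]
  · omega
  · have := Set.ncard_add_ncard_compl T
    have := hmax T hT
    omega

end MetricDimension

section Functigraph

variable {V : Type*} (G : SimpleGraph V) (f : V → V)

@[simp]
theorem functigraph_adj_inl_inl {a b : V} :
    (functigraph G f).Adj (Sum.inl a) (Sum.inl b) ↔ G.Adj a b := by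
  simpa [functigraph, G.adj_comm b a] using G.ne_of_adj

@[simp]
theorem functigraph_adj_inr_inr {a b : V} :
    (functigraph G f).Adj (Sum.inr a) (Sum.inr b) ↔ G.Adj a b := by
  simpa [functigraph, G.adj_comm b a] using G.ne_of_adj

@[simp]
theorem functigraph_adj_inl_inr {a b : V} :
    (functigraph G f).Adj (Sum.inl a) (Sum.inr b) ↔ f a = b := by
  simp [functigraph]

variable {G} in
theorem functigraph_preconnected (hG : G.Preconnected) : (functigraph G f).Preconnected := by
  let inrHom : G →g functigraph G f := ⟨Sum.inr, (functigraph_adj_inr_inr G f).2⟩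
  have reachable_inr (a b : V) : (functigraph G f).Reachable (Sum.inr a) (Sum.inr b) :=
    (hG a b).map inrHom
  have reachable_inl (a : V) : (functigraph G f).Reachable (Sum.inl a) (Sum.inr (f a)) :=
    ((functigraph_adj_inl_inr G f).2 rfl).reachable
  rintro (a | a) (b | b)
  · exact (reachable_inl a).trans ((reachable_inr _ _).trans (reachable_inl b).symm)
  · exact (reachable_inl a).trans (reachable_inr _ _)
  · exact (reachable_inr _ _).trans (reachable_inl b).symm
  · exact reachable_inr a b

end Functigraph

section CompleteGraph

variable {V : Type*} {f : V → V}

theorem functigraph_top_dist_inl_inl {a b : V} (h : a ≠ b) :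
    (functigraph ⊤ f).dist (Sum.inl a) (Sum.inl b) = 1 := by
  simpa [SimpleGraph.dist_eq_one_iff_adj] using h

theorem functigraph_top_dist_inr_inr {a b : V} (h : a ≠ b) :
    (functigraph ⊤ f).dist (Sum.inr a) (Sum.inr b) = 1 := by
  simpa [SimpleGraph.dist_eq_one_iff_adj] using h

theorem functigraph_top_dist_inr_inl [DecidableEq V] (a b : V) :
    (functigraph ⊤ f).dist (Sum.inr b) (Sum.inl a) = if f a = b then 1 else 2 := by
  have hadj {c : V} : (functigraph ⊤ f).Adj (Sum.inr c) (Sum.inl a) ↔ f a = c := by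
    rw [SimpleGraph.adj_comm, functigraph_adj_inl_inr]
  split_ifs with h
  · exact SimpleGraph.dist_eq_one_iff_adj.2 (hadj.2 h)
  · have hconn := functigraph_preconnected f SimpleGraph.preconnected_top
    have hpos := (hconn (Sum.inr b) (Sum.inl a)).pos_dist_of_ne Sum.inr_ne_inl
    have hne := SimpleGraph.dist_eq_one_iff_adj.not.2 (hadj.not.2 h)
    have htri := (hconn (Sum.inr b) (Sum.inr (f a))).dist_triangle_left (Sum.inl a)
    rw [functigraph_top_dist_inr_inr (Ne.symm h), SimpleGraph.dist_eq_one_iff_adj.2 (hadj.2 rfl)]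
      at htri
    omega

section LowerBound

variable {S : Set (V ⊕ V)}

theorem IsResolving.exists_inr_mem_separating (hS : IsResolving (functigraph ⊤ f) S) {x y : V}
    (hx : Sum.inl x ∉ S) (hy : Sum.inl y ∉ S) (hxy : x ≠ y) :
    ∃ w, Sum.inr w ∈ S ∧ ¬(f x = w ↔ f y = w) := by
  classical
  obtain ⟨w | w, hw, hdist⟩ := hS _ _ (Sum.inl_injective.ne hxy)
  · have hxw : x ≠ w := by rintro rfl; exact hx hw
    have hyw : y ≠ w := by rintro rfl; exact hy hw
    rw [functigraph_top_dist_inl_inl hxw, functigraph_top_dist_inl_inl hyw] at hdist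
    exact absurd rfl hdist
  · refine ⟨w, hw, fun hiff => hdist ?_⟩
    rw [SimpleGraph.dist_comm, functigraph_top_dist_inr_inl, SimpleGraph.dist_comm,
      functigraph_top_dist_inr_inl, if_congr hiff rfl rfl]

theorem IsResolving.injOn_preimage_inl_compl (hS : IsResolving (functigraph ⊤ f) S) :
    Set.InjOn f (Sum.inl ⁻¹' Sᶜ) := by
  intro x hx y hy hfxy
  by_contra hxy
  obtain ⟨w, -, hw⟩ := hS.exists_inr_mem_separating hx hy hxy
  exact hw (by rw [hfxy])

theorem IsResolving.subsingleton_image_inter_preimage_inr_compl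
    (hS : IsResolving (functigraph ⊤ f) S) :
    (f '' (Sum.inl ⁻¹' Sᶜ) ∩ Sum.inr ⁻¹' Sᶜ).Subsingleton := by
  rintro _ ⟨⟨x, hx, rfl⟩, hfx⟩ _ ⟨⟨y, hy, rfl⟩, hfy⟩
  by_contra hfxy
  obtain ⟨w, hwS, hw⟩ := hS.exists_inr_mem_separating hx hy (ne_of_apply_ne f hfxy)
  have hfxw : f x ≠ w := by rintro rfl; exact hfx hwS
  have hfyw : f y ≠ w := by rintro rfl; exact hfy hwS
  exact hw (iff_of_false hfxw hfyw)

theorem IsResolving.subsingleton_preimage_inr_compl_sdiff_range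
    (hS : IsResolving (functigraph ⊤ f) S) :
    (Sum.inr ⁻¹' Sᶜ \ Set.range f).Subsingleton := by
  classical
  rintro x ⟨hx, hxf⟩ y ⟨hy, hyf⟩
  by_contra hxy
  obtain ⟨w | w, hw, hdist⟩ := hS _ _ (Sum.inr_injective.ne hxy)
  · rw [functigraph_top_dist_inr_inl, functigraph_top_dist_inr_inl, if_neg fun h => hxf ⟨w, h⟩,
      if_neg fun h => hyf ⟨w, h⟩] at hdist
    exact hdist rfl
  · have hxw : x ≠ w := by rintro rfl; exact hx hw
    have hyw : y ≠ w := by rintro rfl; exact hy hw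
    rw [functigraph_top_dist_inr_inr hxw, functigraph_top_dist_inr_inr hyw] at hdist
    exact hdist rfl

theorem IsResolving.ncard_compl_le [Finite V] (hS : IsResolving (functigraph ⊤ f) S) :
    Sᶜ.ncard ≤ (Set.range f).ncard + 2 := by
  set A : Set V := Sum.inl ⁻¹' Sᶜ
  set B : Set V := Sum.inr ⁻¹' Sᶜ
  have hcompl : A.ncard + B.ncard = Sᶜ.ncard :=
    ncard_preimage_inl_add_ncard_preimage_inr Sᶜ.toFinite
  have hA : (f '' A).ncard = A.ncard := hS.injOn_preimage_inl_compl.ncard_image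
  have hB : (B ∩ Set.range f).ncard + (B \ Set.range f).ncard = B.ncard :=
    Set.ncard_inter_add_ncard_sdiff_eq_ncard B (Set.range f)
  have hdiff : (B \ Set.range f).ncard ≤ 1 :=
    Set.ncard_le_one_iff_subsingleton.2 hS.subsingleton_preimage_inr_compl_sdiff_range
  have hinter : (f '' A ∩ (B ∩ Set.range f)).ncard ≤ 1 :=
    Set.ncard_le_one_iff_subsingleton.2 <| hS.subsingleton_image_inter_preimage_inr_compl.anti <|
      Set.inter_subset_inter_right _ Set.inter_subset_left
  have hunion : (f '' A ∪ (B ∩ Set.range f)).ncard ≤ (Set.range f).ncard :=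
    Set.ncard_le_ncard (Set.union_subset (Set.image_subset_range f A) Set.inter_subset_right)
  have hincl := Set.ncard_union_add_ncard_inter (f '' A) (B ∩ Set.range f)
  omega

end LowerBound

section UpperBound

variable {a : V}

theorem exists_inl_dist_inr_ne_dist_inr (ha : f '' {a}ᶜ = Set.range f) {c d : V}
    (hc : c ∈ Set.range f) (hcd : c ≠ d) :
    ∃ y ≠ a, (functigraph ⊤ f).dist (Sum.inr c) (Sum.inl y) ≠
      (functigraph ⊤ f).dist (Sum.inr d) (Sum.inl y) := by
  classical
  obtain ⟨y, hya, rfl⟩ := ha.symm ▸ hc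
  refine ⟨y, hya, ?_⟩
  simp [functigraph_top_dist_inr_inl, hcd]

theorem exists_inl_dist_inl_ne_dist_inr (ha : f '' {a}ᶜ = Set.range f)
    (hf : (Set.range f).Nontrivial) (c : V) :
    ∃ y ≠ a, (functigraph ⊤ f).dist (Sum.inl a) (Sum.inl y) ≠
      (functigraph ⊤ f).dist (Sum.inr c) (Sum.inl y) := by
  classical
  obtain ⟨d, hd, hdc⟩ := hf.exists_ne c
  obtain ⟨y, hya, rfl⟩ := ha.symm ▸ hd
  refine ⟨y, hya, ?_⟩
  simp [functigraph_top_dist_inl_inl (Ne.symm hya), functigraph_top_dist_inr_inl, hdc]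

theorem isResolving_functigraph_top_compl (ha : f '' {a}ᶜ = Set.range f)
    (hf : (Set.range f).Nontrivial) (b : V) :
    IsResolving (functigraph ⊤ f) (insert (Sum.inl a) (Sum.inr '' insert b (Set.range f)))ᶜ := by
  refine IsResolving.of_pairwise_compl
    (functigraph_preconnected f SimpleGraph.preconnected_top) ?_
  rw [compl_compl]
  have inl_mem {y : V} (hy : y ≠ a) :
      Sum.inl y ∈ (insert (Sum.inl a) (Sum.inr '' insert b (Set.range f)))ᶜ := by simpa using hy
  rintro _ (rfl | ⟨c, hc, rfl⟩) _ (rfl | ⟨d, hd, rfl⟩) hne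
  · exact absurd rfl hne
  · obtain ⟨y, hy, hdist⟩ := exists_inl_dist_inl_ne_dist_inr ha hf d
    exact ⟨_, inl_mem hy, hdist⟩
  · obtain ⟨y, hy, hdist⟩ := exists_inl_dist_inl_ne_dist_inr ha hf c
    exact ⟨_, inl_mem hy, hdist.symm⟩
  · have hcd : c ≠ d := ne_of_apply_ne Sum.inr hne
    obtain hc | hd : c ∈ Set.range f ∨ d ∈ Set.range f := by
      rcases hc with rfl | hc
      · exact .inr (hd.resolve_left hcd.symm)
      · exact .inl hc
    · obtain ⟨y, hy, hdist⟩ := exists_inl_dist_inr_ne_dist_inr ha hc hcd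
      exact ⟨_, inl_mem hy, hdist⟩
    · obtain ⟨y, hy, hdist⟩ := exists_inl_dist_inr_ne_dist_inr ha hd hcd.symm
      exact ⟨_, inl_mem hy, hdist.symm⟩

theorem exists_isResolving_functigraph_top_ncard_compl [Finite V] (hf : (Set.range f).Nontrivial)
    (hinj : ¬Function.Injective f) :
    ∃ S, IsResolving (functigraph ⊤ f) S ∧ Sᶜ.ncard = (Set.range f).ncard + 2 := by
  obtain ⟨a, ha⟩ := exists_image_compl_singleton_eq_range hinj
  obtain ⟨b, hb⟩ : ∃ b, b ∉ Set.range f := by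
    simpa [Function.Surjective] using Finite.injective_iff_surjective.not.1 hinj
  refine ⟨_, isResolving_functigraph_top_compl ha hf b, ?_⟩
  rw [compl_compl, Set.ncard_insert_of_notMem (by simp),
    Set.ncard_image_of_injective _ Sum.inr_injective, Set.ncard_insert_of_notMem hb]

end UpperBound

end CompleteGraph

theorem stmt7_general {V : Type*} [Finite V] (f : V → V) (hlower : 1 < (Set.range f).ncard)
    (hupper : (Set.range f).ncard < Nat.card V) :
    metricDim (functigraph ⊤ f) = 2 * Nat.card V - 2 - (Set.range f).ncard := by
  have hinj : ¬Function.Injective f := fun h => hupper.ne (Set.ncard_range_of_injective h)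
  obtain ⟨S, hS, hcard⟩ := exists_isResolving_functigraph_top_ncard_compl
    (Set.one_lt_ncard_iff_nontrivial.1 hlower) hinj
  rw [hS.metricDim_eq_card_sub fun T hT => hcard ▸ hT.ncard_compl_le, hcard, Nat.card_sum]
  omega

theorem stmt7 (n : ℕ) (hn : 3 <= n) (f : Fin n -> Fin n) (s : ℕ)
    (hs : s = (Finset.univ.image f).card) (hs1 : 1 < s) (hs2 : s < n) :
    metricDim (functigraph (⊤ : SimpleGraph (Fin n)) f) = 2 * n - 2 - s := by
  have hrange : (Set.range f).ncard = s := by simp [hs, ← Set.ncard_coe_finset]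
  simpa [hrange] using stmt7_general f (hrange ▸ hs1) (by simpa [hrange] using hs2)
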